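/- For every integer n ≥ 6, the quantity f_6(n) satisfies f_6(n) ≤ (14/15) · n³/3! + n² · log₂ n. -/

import Mathlib

/-- A complete `r`-partite `r`-graph (a "block") on a finite vertex set `V ⊆ ℕ`:
it is determined by `r` pairwise disjoint nonempty subsets of `V`. -/
structure Block (V : Finset ℕ) (r : ℕ) where
  parts : Fin r → Finset ℕ
  nonempty : ∀ i, (parts i).Nonempty
  subset : ∀ i, parts i ⊆ V
  disj : ∀ i j, i ≠ j → Disjoint (parts i) (parts j)

/-- The edge set of a block: all sets contained in the union of the parts
meeting each part in exactly one vertex. -/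
def Block.edges {V : Finset ℕ} {r : ℕ} (B : Block V r) : Set (Finset ℕ) :=
  {X | (∀ i, (X ∩ B.parts i).card = 1) ∧ ∀ x ∈ X, ∃ i, x ∈ B.parts i}

/-- `ExactCover V r k F` : there are `k` complete `r`-partite `r`-graphs on `V`
whose edge sets are pairwise disjoint and whose union is the family `F`. -/
def ExactCover (V : Finset ℕ) (r k : ℕ) (F : Set (Finset ℕ)) : Prop :=
  ∃ B : Fin k → Block V r,
    (∀ i j, i ≠ j → Disjoint (B i).edges (B j).edges) ∧
    (⋃ i, (B i).edges) = F

/-- `f r n` : the minimum number of complete `r`-partite `r`-graphs needed to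
partition the edge set of the complete `r`-uniform hypergraph on `[n]`. -/
noncomputable def f (r n : ℕ) : ℕ :=
  sInf {k | ExactCover (Finset.range n) r k
    {X | X ⊆ Finset.range n ∧ X.card = r}}

lemma Block.card_inter_sum {V : Finset ℕ} {r : ℕ} (B : Block V r) (X : Finset ℕ) :
    ∑ i, (X ∩ B.parts i).card = (X ∩ Finset.univ.biUnion B.parts).card := by
  rw [Finset.inter_biUnion, Finset.card_biUnion]
  exact fun i _ j _ hij =>
    (B.disj i j hij).mono Finset.inter_subset_right Finset.inter_subset_right

lemma Block.mem_edges_iff {V : Finset ℕ} {r : ℕ} (B : Block V r) (X : Finset ℕ) :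
    X ∈ B.edges ↔ X.card = r ∧ ∏ i, (X ∩ B.parts i).card ≠ 0 := by
  have hs := B.card_inter_sum X
  rw [Finset.prod_ne_zero_iff]
  constructor
  · rintro ⟨h1, h2⟩
    refine ⟨?_, fun i _ => by simp [h1 i]⟩
    have : X ∩ Finset.univ.biUnion B.parts = X := by
      rw [Finset.inter_eq_left]
      intro x hx
      simpa using h2 x hx
    simpa [h1, this] using hs.symm
  · rintro ⟨hX, h⟩
    have hle : ∀ i ∈ Finset.univ, 1 ≤ (X ∩ B.parts i).card :=
      fun i hi => Nat.one_le_iff_ne_zero.2 (h i hi)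
    have hcard : (X ∩ Finset.univ.biUnion B.parts).card ≤ X.card :=
      Finset.card_le_card Finset.inter_subset_left
    have hr : ∑ i : Fin r, 1 = r := by simp
    have hsum := Finset.sum_le_sum hle
    have heq : ∑ i : Fin r, 1 = ∑ i, (X ∩ B.parts i).card := by omega
    refine ⟨fun i => ((Finset.sum_eq_sum_iff_of_le hle).1 heq i (Finset.mem_univ i)).symm,
      fun x hx => ?_⟩
    have := Finset.eq_of_subset_of_card_le
      (Finset.inter_subset_left : X ∩ Finset.univ.biUnion B.parts ⊆ X) (by omega)
    rw [← this] at hx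
    simpa using Finset.mem_of_mem_inter_right hx

lemma Block.subset_of_mem_edges {V : Finset ℕ} {r : ℕ} (B : Block V r) {X : Finset ℕ}
    (h : X ∈ B.edges) : X ⊆ V := fun x hx =>
  let ⟨i, hi⟩ := h.2 x hx
  B.subset i hi

lemma exactCover_of_sum_prod {V : Finset ℕ} {r k : ℕ} (B : Fin k → Block V r)
    (h : ∀ X ⊆ V, X.card = r → ∑ i, ∏ t, (X ∩ (B i).parts t).card = 1) :
    ExactCover V r k {X | X ⊆ V ∧ X.card = r} := by
  refine ⟨B, fun i j hij => ?_, ?_⟩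
  · rw [Set.disjoint_left]
    intro X hi hj
    have hX := h X ((B i).subset_of_mem_edges hi) (((B i).mem_edges_iff X).1 hi).1
    have hle := Finset.add_le_sum (f := fun i => ∏ t, (X ∩ (B i).parts t).card)
      (fun _ _ => Nat.zero_le _) (Finset.mem_univ i) (Finset.mem_univ j) hij
    have h1 := (((B i).mem_edges_iff X).1 hi).2
    have h2 := (((B j).mem_edges_iff X).1 hj).2
    omega
  · ext X
    simp only [Set.mem_iUnion, Set.mem_ofPred_eq]
    constructor
    · rintro ⟨i, hi⟩
      exact ⟨(B i).subset_of_mem_edges hi, (((B i).mem_edges_iff X).1 hi).1⟩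
    · rintro ⟨hV, hX⟩
      obtain ⟨i, -, hi⟩ := Finset.exists_ne_zero_of_sum_ne_zero
        (by rw [h X hV hX]; exact one_ne_zero)
      exact ⟨i, ((B i).mem_edges_iff X).2 ⟨hX, hi⟩⟩

/-- Number of points of `Y` in `A`. -/
def hits (A Y : Finset ℕ) : ℕ := (A ∩ Y).card

/-- The function `φ` on finite sets is the sum, over a list of at most `k` families of `r` pairwise
disjoint (possibly empty) subsets of `V`, of the number of transversals of the family
inside a given set. -/
def TransversalSum (r : ℕ) (V : Finset ℕ) (k : ℕ) (φ : Finset ℕ → ℕ) : Prop :=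
  ∃ L : List (List (Finset ℕ)), L.length ≤ k ∧
    (∀ P ∈ L, P.length = r ∧ P.Pairwise Disjoint ∧ ∀ p ∈ P, p ⊆ V) ∧
    ∀ Y, (L.map fun P => (P.map fun p => hits p Y).prod).sum = φ Y

/-- The number of `r`-subsets of `V ∩ Y`. -/
def esym (r : ℕ) (V Y : Finset ℕ) : ℕ := (hits V Y).choose r

section hits

lemma hits_union {A B : Finset ℕ} (h : Disjoint A B) (Y : Finset ℕ) :
    hits (A ∪ B) Y = hits A Y + hits B Y := by
  unfold hits
  rw [Finset.union_inter_distrib_right, Finset.card_union_of_disjoint]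
  exact h.mono Finset.inter_subset_left Finset.inter_subset_left

lemma hits_insert {x : ℕ} {A : Finset ℕ} (h : x ∉ A) (Y : Finset ℕ) :
    hits (insert x A) Y = hits {x} Y + hits A Y := by
  rw [Finset.insert_eq, hits_union (by simpa using h)]

lemma hits_singleton (x : ℕ) (Y : Finset ℕ) : hits {x} Y = 0 ∨ hits {x} Y = 1 := by
  have : hits {x} Y ≤ 1 := (Finset.card_le_card Finset.inter_subset_left).trans (by simp)
  omega

@[simp] lemma hits_empty (Y : Finset ℕ) : hits ∅ Y = 0 := by simp [hits]

lemma esym_insert (r : ℕ) {x : ℕ} {A : Finset ℕ} (h : x ∉ A) (Y : Finset ℕ) :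
    esym (r + 1) (insert x A) Y = esym (r + 1) A Y + hits {x} Y * esym r A Y := by
  unfold esym
  rw [hits_insert h]
  rcases hits_singleton x Y with h0 | h0
  · simp [h0]
  · rw [h0, add_comm 1, Nat.choose_succ_succ']
    ring

@[simp] lemma esym_one (V Y : Finset ℕ) : esym 1 V Y = hits V Y := by simp [esym]

@[simp] lemma esym_empty (r : ℕ) (Y : Finset ℕ) : esym (r + 1) ∅ Y = 0 := by simp [esym]

lemma esym_four_union {A B : Finset ℕ} (h : Disjoint A B) (Y : Finset ℕ) :
    esym 4 (A ∪ B) Y = esym 4 A Y + esym 4 B Y + esym 3 A Y * hits B Y + hits A Y * esym 3 B Y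
      + esym 2 A Y * esym 2 B Y := by
  unfold esym
  rw [hits_union h, Nat.add_choose_eq, Finset.Nat.antidiagonal_succ]
  simp [Finset.Nat.antidiagonal_succ]
  ring

end hits

namespace TransversalSum

variable {r s k l : ℕ} {V W : Finset ℕ} {φ ψ : Finset ℕ → ℕ}

lemma mono (h : TransversalSum r V k φ) (hV : V ⊆ W) (hk : k ≤ l) :
    TransversalSum r W l φ := by
  obtain ⟨L, h1, h2, h3⟩ := h
  exact ⟨L, h1.trans hk,
    fun P hP => ⟨(h2 P hP).1, (h2 P hP).2.1, fun p hp => ((h2 P hP).2.2 p hp).trans hV⟩, h3⟩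

lemma congr (h : TransversalSum r V k φ) (e : ∀ Y, φ Y = ψ Y) : TransversalSum r V k ψ :=
  (funext e : φ = ψ) ▸ h

lemma zero (r : ℕ) (V : Finset ℕ) : TransversalSum r V 0 fun _ => 0 :=
  ⟨[], by simp, by simp, by simp⟩

lemma single (V : Finset ℕ) : TransversalSum 1 V 1 fun Y => hits V Y :=
  ⟨[[V]], by simp, by simp, by simp⟩

lemma add (h : TransversalSum r V k φ) (h' : TransversalSum r V l ψ) :
    TransversalSum r V (k + l) fun Y => φ Y + ψ Y := by
  obtain ⟨L, h1, h2, h3⟩ := h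
  obtain ⟨M, h1', h2', h3'⟩ := h'
  refine ⟨L ++ M, by simp; omega, ?_, fun Y => by simp [← h3, ← h3']⟩
  intro P hP
  rcases List.mem_append.1 hP with hP | hP
  · exact h2 P hP
  · exact h2' P hP

lemma mul (h : TransversalSum r V k φ) (h' : TransversalSum s W l ψ) (hd : Disjoint V W) :
    TransversalSum (r + s) (V ∪ W) (k * l) fun Y => φ Y * ψ Y := by
  obtain ⟨L, h1, h2, h3⟩ := h
  obtain ⟨M, h1', h2', h3'⟩ := h'
  refine ⟨L.flatMap fun P => M.map fun Q => P ++ Q, ?_, ?_, ?_⟩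
  · simpa [List.length_flatMap] using Nat.mul_le_mul h1 h1'
  · intro R hR
    simp only [List.mem_flatMap, List.mem_map] at hR
    obtain ⟨P, hP, Q, hQ, rfl⟩ := hR
    obtain ⟨a1, a2, a3⟩ := h2 P hP
    obtain ⟨b1, b2, b3⟩ := h2' Q hQ
    refine ⟨by simp [a1, b1], ?_, ?_⟩
    · rw [List.pairwise_append]
      exact ⟨a2, b2, fun p hp q hq => hd.mono (a3 p hp) (b3 q hq)⟩
    · intro p hp
      rcases List.mem_append.1 hp with hp | hp
      · exact (a3 p hp).trans Finset.subset_union_left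
      · exact (b3 p hp).trans Finset.subset_union_right
  · intro Y
    simp only [← h3, ← h3']
    clear h1 h2 h3
    induction L with
    | nil => simp
    | cons P L ih =>
      rw [List.flatMap_cons, List.map_append, List.sum_append, ih]
      simp [add_mul, List.sum_map_mul_left, Function.comp_def]

lemma biclique {A B : Finset ℕ} (hd : Disjoint A B) (hA : A ⊆ V) (hB : B ⊆ V) :
    TransversalSum 2 V 1 fun Y => hits A Y * hits B Y :=
  ((single A).mul (single B) hd).mono (Finset.union_subset hA hB) le_rfl

/-- The edges of a complete graph are partitioned by stars. -/
lemma esym_two (V : Finset ℕ) : TransversalSum 2 V (V.card - 1) fun Y => esym 2 V Y := by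
  induction V using Finset.induction_on with
  | empty => simpa using zero 2 ∅
  | insert x U hx ih =>
    rcases U.eq_empty_or_nonempty with rfl | hU
    · refine (zero 2 _).congr fun Y => ?_
      rw [esym_insert 1 hx]
      simp
    · have hU := hU.card_pos
      refine ((ih.mono (Finset.subset_insert x U) le_rfl).add
        (biclique (A := {x}) (B := U) (by simpa using hx) (by simp)
          (Finset.subset_insert x U))).mono subset_rfl ?_ |>.congr fun Y => ?_
      · rw [Finset.card_insert_of_notMem hx]
        omega
      · rw [esym_insert 1 hx, esym_one]

/-- Partition the triples by their middle vertex, listing the vertices of `W` after those of `U`. -/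
lemma esym_three_add (U W : Finset ℕ) (hd : Disjoint U W) :
    TransversalSum 3 (U ∪ W) U.card fun Y => esym 3 U Y + esym 2 U Y * hits W Y := by
  induction U using Finset.induction_on generalizing W with
  | empty => simpa using zero 3 _
  | insert x U hx ih =>
    rw [Finset.disjoint_insert_left] at hd
    have h1 := ih (insert x W) (by simp [hd.2, hx])
    have h2 := ((single {x}).mul (single U) (by simpa using hx)).mul (single W)
      (by simp [hd.1, hd.2])
    refine ((h1.mono (W := insert x U ∪ W) ?_ le_rfl).add (h2.mono ?_ le_rfl)).mono subset_rfl ?_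
      |>.congr fun Y => ?_
    · intro y; simp
    · intro y; simp
    · rw [Finset.card_insert_of_notMem hx]
    · rw [esym_insert 2 hx, esym_insert 1 hx, esym_one, hits_insert hd.1]
      ring

lemma esym_three (V : Finset ℕ) : TransversalSum 3 V V.card fun Y => esym 3 V Y := by
  simpa using esym_three_add V ∅ (by simp)

/-- Partition the `6`-sets by their fifth vertex, listing the vertices of `W` after those
of `U`. -/
lemma esym_six_add (c : ℕ → ℕ)
    (hc : ∀ V : Finset ℕ, TransversalSum 4 V (c V.card) fun Y => esym 4 V Y)
    (U W : Finset ℕ) (hd : Disjoint U W) :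
    TransversalSum 6 (U ∪ W) (∑ v ∈ Finset.range U.card, c v)
      fun Y => esym 6 U Y + esym 5 U Y * hits W Y := by
  induction U using Finset.induction_on generalizing W with
  | empty => simpa using zero 6 _
  | insert x U hx ih =>
    rw [Finset.disjoint_insert_left] at hd
    have h1 := ih (insert x W) (by simp [hd.2, hx])
    have h2 := ((hc U).mul (single {x}) (by simpa using hx)).mul (single W)
      (by simp [hd.1, hd.2])
    refine ((h1.mono (W := insert x U ∪ W) ?_ le_rfl).add (h2.mono ?_ le_rfl)).mono subset_rfl ?_
      |>.congr fun Y => ?_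
    · intro y; simp
    · intro y; simp
    · rw [Finset.card_insert_of_notMem hx, Finset.sum_range_succ]
      simp
    · rw [esym_insert 5 hx, esym_insert 4 hx, hits_insert hd.1]
      ring

lemma esym_six (c : ℕ → ℕ)
    (hc : ∀ V : Finset ℕ, TransversalSum 4 V (c V.card) fun Y => esym 4 V Y) (V : Finset ℕ) :
    TransversalSum 6 V (∑ v ∈ Finset.range V.card, c v) fun Y => esym 6 V Y := by
  simpa using esym_six_add c hc V ∅ (by simp)

/-- The product of a complete `4`-partite graph and a complete `6`-partite graph is partitioned
into `14` products of two complete bipartite graphs. -/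
lemma fourteen {p₀ p₁ p₂ p₃ q₀ q₁ q₂ q₃ q₄ q₅ : Finset ℕ}
    (hp : [p₀, p₁, p₂, p₃].Pairwise Disjoint) (hq : [q₀, q₁, q₂, q₃, q₄, q₅].Pairwise Disjoint)
    (hpV : ∀ p ∈ [p₀, p₁, p₂, p₃], p ⊆ V) (hqW : ∀ q ∈ [q₀, q₁, q₂, q₃, q₄, q₅], q ⊆ W)
    (hd : Disjoint V W) :
    TransversalSum 4 (V ∪ W) 14 fun Y =>
      (hits p₀ Y * (hits p₁ Y + hits p₂ Y + hits p₃ Y) + hits p₁ Y * (hits p₂ Y + hits p₃ Y)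
        + hits p₂ Y * hits p₃ Y) *
      (hits q₀ Y * (hits q₁ Y + hits q₂ Y + hits q₃ Y + hits q₄ Y + hits q₅ Y)
        + hits q₁ Y * (hits q₂ Y + hits q₃ Y + hits q₄ Y + hits q₅ Y)
        + hits q₂ Y * (hits q₃ Y + hits q₄ Y + hits q₅ Y)
        + hits q₃ Y * (hits q₄ Y + hits q₅ Y) + hits q₄ Y * hits q₅ Y) := by
  simp only [List.pairwise_cons, List.mem_cons, List.not_mem_nil, or_false, forall_eq_or_imp,
    forall_eq, List.Pairwise.nil, and_true, IsEmpty.forall_iff, implies_true] at hp hq hpV hqW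
  obtain ⟨⟨p01, p02, p03⟩, ⟨p12, p13⟩, p23⟩ := hp
  obtain ⟨⟨q01, q02, q03, q04, q05⟩, ⟨q12, q13, q14, q15⟩, ⟨q23, q24, q25⟩, ⟨q34, q35⟩, q45⟩ := hq
  have hV : ∀ A B, Disjoint A B → A ⊆ V → B ⊆ V →
      TransversalSum 2 V 1 fun Y => hits A Y * hits B Y := fun _ _ => biclique
  have hW : ∀ A B, Disjoint A B → A ⊆ W → B ⊆ W →
      TransversalSum 2 W 1 fun Y => hits A Y * hits B Y := fun _ _ => biclique
  have C0 := hV (p₀ ∪ p₁) (p₂ ∪ p₃) (by simp [*]) (by simp [Finset.union_subset_iff, *])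
    (by simp [Finset.union_subset_iff, *])
  have C1 := hV (p₀ ∪ p₂) (p₁ ∪ p₃) (by simp [*, p12.symm]) (by simp [Finset.union_subset_iff, *])
    (by simp [Finset.union_subset_iff, *])
  have C2 := hV (p₀ ∪ p₃) (p₁ ∪ p₂) (by simp [*, p13.symm, p23.symm])
    (by simp [Finset.union_subset_iff, *]) (by simp [Finset.union_subset_iff, *])
  have M0 := (hV p₀ p₁ p01 hpV.1 hpV.2.1).add (hV p₂ p₃ p23 hpV.2.2.1 hpV.2.2.2)
  have M1 := (hV p₀ p₂ p02 hpV.1 hpV.2.2.1).add (hV p₁ p₃ p13 hpV.2.1 hpV.2.2.2)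
  have M2 := (hV p₀ p₃ p03 hpV.1 hpV.2.2.2).add (hV p₁ p₂ p12 hpV.2.1 hpV.2.2.1)
  have X0 := (hW q₁ (q₂ ∪ q₄) (by simp [*]) (by simp [*])
    (by simp [Finset.union_subset_iff, *])).add
    (hW q₀ (q₂ ∪ q₃) (by simp [*]) (by simp [*]) (by simp [Finset.union_subset_iff, *]))
  have X1 := (hW (q₃ ∪ q₅) q₄ (by simp [*, q45.symm]) (by simp [Finset.union_subset_iff, *])
    (by simp [*])).add
    (hW (q₀ ∪ q₅) q₁ (by simp [*, q15.symm]) (by simp [Finset.union_subset_iff, *]) (by simp [*]))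
  have X2 := (hW q₂ (q₃ ∪ q₄ ∪ q₅) (by simp [*]) (by simp [*])
    (by simp [Finset.union_subset_iff, *])).add
    (hW (q₀ ∪ q₃) q₅ (by simp [*]) (by simp [Finset.union_subset_iff, *]) (by simp [*]))
  have Y0 := hW (q₀ ∪ q₁) (q₂ ∪ q₃ ∪ q₄) (by simp [*]) (by simp [Finset.union_subset_iff, *])
    (by simp [Finset.union_subset_iff, *])
  have Y1 := hW (q₀ ∪ q₃ ∪ q₅) (q₁ ∪ q₄) (by simp [*, q13.symm, q15.symm, q45.symm])
    (by simp [Finset.union_subset_iff, *]) (by simp [Finset.union_subset_iff, *])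
  have Y2 := (hW (q₀ ∪ q₂) (q₄ ∪ q₅) (by simp [*]) (by simp [Finset.union_subset_iff, *])
    (by simp [Finset.union_subset_iff, *])).add
    (hW (q₁ ∪ q₂ ∪ q₅) q₃ (by simp [*, q35.symm]) (by simp [Finset.union_subset_iff, *])
      (by simp [*]))
  refine (((((C0.mul X0 hd).add (C1.mul X1 hd)).add (C2.mul X2 hd)).add (M0.mul Y0 hd)).add
    (M1.mul Y1 hd)).add (M2.mul Y2 hd) |>.congr fun Y => ?_
  simp only [hits_union, Finset.disjoint_union_left, and_true,
    p01, p02, p03, p12, p13, p23, q01, q02, q03, q05, q12, q14, q15, q23, q24, q25,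
    q34, q35, q45]
  ring

/-- A complete graph on `b` vertices times a complete `4`-partite graph needs at most `14 b / 5`
products of complete bipartite graphs. -/
lemma esym_two_mul_fourPartite {p₀ p₁ p₂ p₃ : Finset ℕ}
    (hp : [p₀, p₁, p₂, p₃].Pairwise Disjoint) (hpV : ∀ p ∈ [p₀, p₁, p₂, p₃], p ⊆ V) :
    ∀ (b : ℕ) (B : Finset ℕ), B.card = b → Disjoint V B → ∃ k, 5 * k ≤ 14 * b ∧
      TransversalSum 4 (V ∪ B) k fun Y =>
        (hits p₀ Y * (hits p₁ Y + hits p₂ Y + hits p₃ Y) + hits p₁ Y * (hits p₂ Y + hits p₃ Y)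
          + hits p₂ Y * hits p₃ Y) * esym 2 B Y := by
  intro b
  induction b using Nat.strong_induction_on with
  | _ b ih =>
  intro B hB hd
  rcases Nat.lt_or_ge b 6 with hb | hb
  · simp only [List.pairwise_cons, List.mem_cons, List.not_mem_nil, or_false, forall_eq_or_imp,
      forall_eq, List.Pairwise.nil, and_true, IsEmpty.forall_iff, implies_true] at hp hpV
    obtain ⟨⟨p01, p02, p03⟩, ⟨p12, p13⟩, p23⟩ := hp
    have h : TransversalSum 2 V 3 fun Y =>
        hits p₀ Y * (hits p₁ Y + hits p₂ Y + hits p₃ Y) + hits p₁ Y * (hits p₂ Y + hits p₃ Y)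
          + hits p₂ Y * hits p₃ Y := by
      refine ((biclique (A := p₀) (B := p₁ ∪ p₂ ∪ p₃) (by simp [*]) (by simp [*])
        (by simp [Finset.union_subset_iff, *])).add
        (biclique (A := p₁) (B := p₂ ∪ p₃) (by simp [*]) (by simp [*])
        (by simp [Finset.union_subset_iff, *]))).add
        (biclique p23 hpV.2.2.1 hpV.2.2.2) |>.congr fun Y => ?_
      simp only [hits_union, Finset.disjoint_union_left, and_true, p12, p13, p23]
    exact ⟨3 * (b - 1), by omega, hB ▸ h.mul (esym_two B) hd⟩
  · obtain ⟨b, rfl⟩ := Nat.exists_eq_add_of_le' hb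
    obtain ⟨x₁, B₁, h₁, rfl, c₁⟩ := Finset.card_eq_succ.1 hB
    obtain ⟨x₂, B₂, h₂, rfl, c₂⟩ := Finset.card_eq_succ.1 c₁
    obtain ⟨x₃, B₃, h₃, rfl, c₃⟩ := Finset.card_eq_succ.1 c₂
    obtain ⟨x₄, B₄, h₄, rfl, c₄⟩ := Finset.card_eq_succ.1 c₃
    obtain ⟨x₅, B₅, h₅, rfl, c₅⟩ := Finset.card_eq_succ.1 c₄
    obtain ⟨k, hk, hr⟩ := ih (b + 1) (by omega) B₅ c₅ (hd.mono_right (by intro y; simp; tauto))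
    have hq : [{x₁}, {x₂}, {x₃}, {x₄}, {x₅}, B₅].Pairwise Disjoint := by
      simp only [Finset.mem_insert, not_or] at h₁ h₂ h₃ h₄ h₅
      simp [*]
    refine ⟨14 + k, by omega, ((fourteen hp hq hpV ?_ hd).add
      (hr.mono (Finset.union_subset_union_right ?_) le_rfl)).congr fun Y => ?_⟩
    · simp only [List.mem_cons, List.not_mem_nil, or_false, forall_eq_or_imp, forall_eq]
      refine ⟨?_, ?_, ?_, ?_, ?_, ?_⟩ <;> intro y <;> simp <;> tauto
    · intro y; simp; tauto
    · rw [esym_insert 1 h₁, esym_insert 1 h₂, esym_insert 1 h₃, esym_insert 1 h₄, esym_insert 1 h₅]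
      simp only [esym_one, hits_insert h₂, hits_insert h₃, hits_insert h₄, hits_insert h₅]
      ring

/-- The product of complete graphs on `a` and `b` vertices needs at most `14 a b / 15`
products of complete bipartite graphs. -/
lemma esym_two_mul_esym_two : ∀ (a : ℕ) (A B : Finset ℕ), A.card = a → Disjoint A B →
    ∃ k, 15 * k ≤ 14 * (a * B.card) ∧
      TransversalSum 4 (A ∪ B) k fun Y => esym 2 A Y * esym 2 B Y := by
  intro a
  induction a using Nat.strong_induction_on with
  | _ a ih =>
  intro A B hA hd
  rcases Nat.lt_or_ge a 4 with ha | ha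
  · refine ⟨(a - 1) * (B.card - 1), ?_, hA ▸ (esym_two A).mul (esym_two B) hd⟩
    interval_cases a <;> omega
  · obtain ⟨a, rfl⟩ := Nat.exists_eq_add_of_le' ha
    obtain ⟨x₁, A₁, h₁, rfl, c₁⟩ := Finset.card_eq_succ.1 hA
    obtain ⟨x₂, A₂, h₂, rfl, c₂⟩ := Finset.card_eq_succ.1 c₁
    obtain ⟨x₃, A₃, h₃, rfl, c₃⟩ := Finset.card_eq_succ.1 c₂
    obtain ⟨k, hk, hr⟩ := ih (a + 1) (by omega) A₃ B c₃ (hd.mono_left (by intro y; simp; tauto))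
    have hp : [{x₁}, {x₂}, {x₃}, A₃].Pairwise Disjoint := by
      simp only [Finset.mem_insert, not_or] at h₁ h₂ h₃
      simp [*]
    obtain ⟨l, hl, hs⟩ := esym_two_mul_fourPartite (V := insert x₁ (insert x₂ (insert x₃ A₃))) hp
      (by
        simp only [List.mem_cons, List.not_mem_nil, or_false, forall_eq_or_imp, forall_eq]
        refine ⟨?_, ?_, ?_, ?_⟩ <;> intro y <;> simp <;> tauto) _ B rfl hd
    refine ⟨l + k, by linarith, (hs.add
      (hr.mono (Finset.union_subset_union_left ?_) le_rfl)).congr fun Y => ?_⟩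
    · intro y; simp; tauto
    · rw [esym_insert 1 h₁, esym_insert 1 h₂, esym_insert 1 h₃]
      simp only [esym_one, hits_insert h₂, hits_insert h₃]
      ring

lemma exists_esym_four : ∀ (n : ℕ) (V : Finset ℕ), V.card = n →
    ∃ k, 15 * k ≤ 7 * n ^ 2 + 15 * (n * Nat.clog 2 n) ∧
      TransversalSum 4 V k fun Y => esym 4 V Y := by
  intro n
  induction n using Nat.strong_induction_on with
  | _ n ih =>
  intro V hV
  rcases Nat.lt_or_ge n 2 with hn | hn
  · refine ⟨0, by simp, (zero 4 V).congr fun Y => ?_⟩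
    have : hits V Y ≤ V.card := Finset.card_le_card Finset.inter_subset_left
    exact (Nat.choose_eq_zero_of_lt (by omega)).symm
  · obtain ⟨A, hAV, hA⟩ := Finset.exists_subset_card_eq (s := V) (n := n / 2) (by omega)
    obtain ⟨B, hB⟩ : ∃ B, B = V \ A := ⟨_, rfl⟩
    have hd : Disjoint A B := hB ▸ Finset.disjoint_sdiff
    have hAB : A ∪ B = V := hB ▸ Finset.union_sdiff_of_subset hAV
    have hc : B.card = (n + 1) / 2 := by
      rw [hB, Finset.card_sdiff_of_subset hAV]
      omega
    obtain ⟨k, hk, hr⟩ := ih _ (by omega) A hA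
    obtain ⟨l, hl, hs⟩ := ih _ (by omega) B hc
    obtain ⟨m, hm, ht⟩ := esym_two_mul_esym_two _ A B hA hd
    have h := ((((hr.mono (Finset.subset_union_left (s₂ := B)) le_rfl).add
      (hs.mono (Finset.subset_union_right (s₁ := A)) le_rfl)).add
      ((esym_three A).mul (single B) hd)).add ((single A).mul (esym_three B) hd)).add ht
    rw [hAB] at h
    refine ⟨_, ?_, h.congr fun Y => by rw [← hAB, esym_four_union hd]⟩
    have hlog : Nat.clog 2 n = Nat.clog 2 ((n + 1) / 2) + 1 := by
      rw [Nat.clog_of_two_le (by norm_num) hn]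
      rfl
    have hlog' : Nat.clog 2 (n / 2) ≤ Nat.clog 2 ((n + 1) / 2) := Nat.clog_mono_right 2 (by omega)
    rw [hc] at hm
    rw [hA, hc, hlog]
    have hn' : n = n / 2 + (n + 1) / 2 := by omega
    generalize n / 2 = a at *
    generalize (n + 1) / 2 = b at *
    subst hn'
    have := Nat.mul_le_mul_left a hlog'
    linarith

/-- Families with an empty member have no transversals, so they can be dropped. -/
lemma exactCover (h : TransversalSum r V k fun Y => esym r V Y) :
    ∃ j ≤ k, ExactCover V r j {X | X ⊆ V ∧ X.card = r} := by
  obtain ⟨L, h1, h2, h3⟩ := h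
  let M := L.filter fun P => ∅ ∉ P
  have hM : ∀ i : Fin M.length, M.get i ∈ L ∧ ∅ ∉ M.get i := fun i => by
    simpa [M] using List.mem_filter.1 (M.get_mem i)
  have hlen : ∀ i : Fin M.length, (M.get i).length = r := fun i => (h2 _ (hM i).1).1
  refine ⟨M.length, (List.length_filter_le _ _).trans h1, exactCover_of_sum_prod
    (fun i =>
      { parts := fun t => (M.get i).get (t.cast (hlen i).symm)
        nonempty := fun t => Finset.nonempty_iff_ne_empty.2 fun h0 =>
          (hM i).2 (h0 ▸ List.get_mem _ _)
        subset := fun t => (h2 _ (hM i).1).2.2 _ (List.get_mem _ _)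
        disj := fun t u htu => by
          have := (h2 _ (hM i).1).2.1
          rw [List.pairwise_iff_get] at this
          rcases lt_or_gt_of_ne htu with h | h
          · exact this _ _ h
          · exact (this _ _ h).symm }) ?_⟩
  intro X hV hX
  have hsum : (M.map fun P => (P.map fun p => hits p X).prod).sum = 1 := by
    refine Eq.trans ?_ ((h3 X).trans ?_)
    swap
    · simp [esym, hits, Finset.inter_eq_right.2 hV, hX]
    clear h1 h2 h3 hM hlen
    induction L with
    | nil => rfl
    | cons P L ih =>
      by_cases hP : ∅ ∈ P
      · have : (P.map fun p => hits p X).prod = 0 :=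
          List.prod_eq_zero (List.mem_map.2 ⟨∅, hP, hits_empty X⟩)
        simpa [M, hP, this] using ih
      · simpa [M, hP] using ih
  rw [← hsum, ← Fin.sum_univ_fun_getElem]
  refine Finset.sum_congr rfl fun i _ => ?_
  rw [← Fin.prod_univ_fun_getElem]
  refine Fintype.prod_equiv (finCongr (hlen i).symm) _ _ fun t => ?_
  rw [Finset.inter_comm]
  rfl

end TransversalSum

theorem f_six_upper_bound (n : ℕ) (hn : 6 ≤ n) :
    (f 6 n : ℝ) ≤ (14 / 15 : ℝ) * (n : ℝ) ^ 3 / (Nat.factorial 3) + (n : ℝ) ^ 2 * Real.logb 2 n := by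
  have hc : ∀ m : ℕ, ∃ k, 15 * k ≤ 7 * m ^ 2 + 15 * (m * Nat.clog 2 m) ∧
      ∀ V : Finset ℕ, V.card = m → TransversalSum 4 V k fun Y => esym 4 V Y := by
    intro m
    refine ⟨(7 * m ^ 2 + 15 * (m * Nat.clog 2 m)) / 15, Nat.mul_div_le _ _, fun V hV => ?_⟩
    obtain ⟨k, hk, h⟩ := TransversalSum.exists_esym_four m V hV
    exact h.mono subset_rfl (by omega)
  choose c hc hcV using hc
  obtain ⟨j, hj, hcover⟩ :=
    (TransversalSum.esym_six c (fun V => hcV _ V rfl) (Finset.range n)).exactCover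
  rw [Finset.card_range] at hj
  have hf : f 6 n ≤ ∑ v ∈ Finset.range n, c v := (Nat.sInf_le hcover).trans hj
  have hsum : ∀ m ≤ n,
      90 * ∑ v ∈ Finset.range m, c v ≤ 14 * m ^ 3 + 45 * (m ^ 2 * Nat.clog 2 n) := by
    intro m
    induction m with
    | zero => simp
    | succ m ih =>
      intro hm
      have h1 := ih (by omega)
      have h2 := Nat.mul_le_mul_left m (Nat.clog_mono_right 2 (by omega : m ≤ n))
      have h3 := hc m
      rw [Finset.sum_range_succ]
      nlinarith [Nat.zero_le (Nat.clog 2 n)]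
  have hlog : (Nat.clog 2 n : ℝ) ≤ 2 * Real.logb 2 n := by
    have h1 : (1 : ℝ) ≤ Real.logb 2 n := by
      rw [Real.le_logb_iff_rpow_le (by norm_num) (by positivity)]
      norm_num
      exact_mod_cast (by omega : 2 ≤ n)
    have h2 : (Nat.clog 2 n : ℝ) < Real.logb 2 n + 1 := by
      rw [← Real.natCeil_logb_natCast]
      push_cast
      exact Nat.ceil_lt_add_one (by linarith)
    linarith
  have h1 : (90 : ℝ) * f 6 n ≤ 14 * (n : ℝ) ^ 3 + 45 * ((n : ℝ) ^ 2 * Nat.clog 2 n) := by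
    exact_mod_cast (Nat.mul_le_mul_left 90 hf).trans (hsum n le_rfl)
  have h2 := mul_le_mul_of_nonneg_left hlog (sq_nonneg (n : ℝ))
  norm_num [Nat.factorial]
  linarith
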